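/- arXiv:2507.20611 — 3 statements merged into one kernel-verified Lean document; each statement's English description precedes it below -/
import Mathlib

section
/- Consider the job set P = {(1,0), (2,0), (3,0), (4,0), (1,1), (3,1), (0,2), (2,2), (4,2), (5,2)} of pairs (t, c) with temperature t ∈ ℕ and color c ∈ {0,1,2}. Every schedule S' of P (a list containing each job of P exactly once) whose nominal number of color changes satisfies C(S') ≤ 4 has total process temperature change T(S') ≥ 7. -/
/-- A job is a pair `(t, c)` of a natural-number temperature `t` and a color `c ∈ {0,1,2}`. -/
abbrev Job := ℕ × ℕ

/-- Total process temperature change `T(S) = Σ_{i=1}^{N-1} |t(p_{i+1}) - t(p_i)|`. -/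
def totalTempChange : List Job → ℕ
  | p :: q :: rest => Nat.dist p.1 q.1 + totalTempChange (q :: rest)
  | _ => 0

/-- Nominal number of color changes `C(S) = |{i : c(p_i) ≠ c(p_{i+1})}|`. -/
def nominalColorChanges : List Job → ℕ
  | p :: q :: rest => (if p.2 ≠ q.2 then 1 else 0) + nominalColorChanges (q :: rest)
  | _ => 0

/-- The three-color job set from the paper's outlook section. -/
def P : List Job :=
  [(1,0), (2,0), (3,0), (4,0), (1,1), (3,1), (0,2), (2,2), (4,2), (5,2)]

/-- Distance of natural numbers, by truncated subtraction. -/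
def dst (x y : ℕ) : ℕ := (x - y) + (y - x)

/-- A schedule starting at `l` and visiting `a` travels at least the distance from `l` to `a`. -/
theorem dst_le (S : List Job) : ∀ (l a : Job), a ∈ S →
    dst l.1 a.1 ≤ totalTempChange (l :: S) := by
  induction S with
  | nil => intro l a h; simp at h
  | cons q S ih =>
    intro l a h
    simp only [totalTempChange, Nat.dist]
    rcases List.mem_cons.mp h with rfl | h
    · unfold dst; omega
    · have := ih q a h
      unfold dst at *; omega

/-- A schedule starting at `l` and visiting `a` and `b` first reaches one of them and then
travels to the other. -/
theorem dst_pair_le (S : List Job) : ∀ (l a b : Job), a ∈ S → b ∈ S →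
    dst a.1 b.1 + min (dst l.1 a.1) (dst l.1 b.1) ≤ totalTempChange (l :: S) := by
  induction S with
  | nil => intro l a b h; simp at h
  | cons q S ih =>
    intro l a b ha hb
    simp only [totalTempChange, Nat.dist]
    rcases List.mem_cons.mp ha with rfl | ha2 <;> rcases List.mem_cons.mp hb with rfl | hb2
    · unfold dst; omega
    · have := dst_le S a b hb2
      unfold dst at *; omega
    · have := dst_le S b a ha2
      unfold dst at *; omega
    · have := ih q a b ha2 hb2
      unfold dst at *; omega

/-- Bound check: the temperature budget `T` suffices to visit the first and last job of `r`. -/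
def feas (l : Job) : List Job → ℕ → Bool
  | [], _ => true
  | a :: r, T =>
    Nat.ble (dst a.1 (List.getLast (a :: r) (by simp)).1 + dst l.1 a.1) T ||
    Nat.ble (dst a.1 (List.getLast (a :: r) (by simp)).1 +
      dst l.1 (List.getLast (a :: r) (by simp)).1) T

theorem feas_of_perm (S : List Job) (l : Job) (r : List Job) (T : ℕ) (hp : S.Perm r)
    (hT : totalTempChange (l :: S) ≤ T) : feas l r T = true := by
  cases r with
  | nil => rfl
  | cons a r =>
    have h := dst_pair_le S l a (List.getLast (a :: r) (by simp))
      (hp.symm.subset (by simp)) (hp.symm.subset (List.getLast_mem _))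
    simp only [feas, Bool.or_eq_true, Nat.ble_eq]
    omega

/-- Exhaustive search: can the `n` jobs `r` be scheduled after job `l` within temperature
budget `T` and color-change budget `C`? -/
def srch : ℕ → Job → List Job → ℕ → ℕ → Bool
  | 0, _, _, _, _ => true
  | n + 1, l, r, T, C => feas l r T && r.any fun q =>
      Nat.ble ((l.1 - q.1) + (q.1 - l.1)) T &&
      (Nat.ble (cond (Nat.beq l.2 q.2) 0 1) C &&
        srch n q (r.erase q) (T - ((l.1 - q.1) + (q.1 - l.1))) (C - cond (Nat.beq l.2 q.2) 0 1))

theorem srch_sound (S : List Job) : ∀ (l : Job) (r : List Job) (T C : ℕ), S.Perm r →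
    totalTempChange (l :: S) ≤ T → nominalColorChanges (l :: S) ≤ C →
    srch S.length l r T C = true := by
  induction S with
  | nil => intros; rfl
  | cons q S ih =>
    intro l r T C hp hT hC
    have hc : cond (Nat.beq l.2 q.2) 0 1 = if l.2 ≠ q.2 then 1 else 0 := by
      by_cases h : l.2 = q.2
      · simp [h]
      · have : Nat.beq l.2 q.2 = false := by
          rw [← Bool.not_eq_true, Nat.beq_eq]; exact h
        simp [h, this]
    have hT' := hT
    simp only [totalTempChange, nominalColorChanges, Nat.dist] at hT hC
    rw [← hc] at hC
    simp only [List.length_cons, srch, Bool.and_eq_true, List.any_eq_true]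
    refine ⟨feas_of_perm _ _ _ _ hp hT', q, hp.subset (by simp), ?_⟩
    simp only [Nat.ble_eq]
    refine ⟨by omega, by omega, ih _ _ _ _ ?_ (by omega) (by omega)⟩
    have := hp.erase q
    simpa using this

/-- The jobs of `P`, sorted by temperature. -/
def Q : List Job :=
  [(0,2), (1,0), (1,1), (2,0), (2,2), (3,0), (3,1), (4,0), (4,2), (5,2)]

theorem P_perm_Q : P.Perm Q := by decide

set_option maxRecDepth 100000 in
theorem srch_Q : (Q.any fun p => srch 9 p (Q.erase p) 6 4) = false := by
  decide +kernel

/-- Every schedule of `P` with at most `4` nominal color changes has total process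
temperature change at least `7`. -/
theorem outlook_lower_bound (S' : List Job) (hperm : S'.Perm P)
    (hC : nominalColorChanges S' ≤ 4) :
    7 ≤ totalTempChange S' := by
  by_contra hT
  have hq := hperm.trans P_perm_Q
  have hlen := hperm.length_eq
  cases S' with
  | nil => simp [P] at hlen
  | cons p S =>
    have hl : S.length = 9 := by simpa [P] using hlen
    have h1 : S.Perm (Q.erase p) := by simpa using hq.erase p
    have h2 := srch_sound S p (Q.erase p) 6 4 h1 (by omega) hC
    rw [hl] at h2
    have h3 : (Q.any fun p => srch 9 p (Q.erase p) 6 4) = true :=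
      List.any_eq_true.mpr ⟨p, hq.subset (by simp), h2⟩
    rw [srch_Q] at h3
    exact absurd h3 (by decide)
end

section
/- Consider the job set P = {(1,0), (2,0), (3,0), (4,0), (1,1), (3,1), (0,2), (2,2), (4,2), (5,2)} of pairs (t, c) with temperature t ∈ ℕ and color c ∈ {0,1,2}, and the schedule S = ((0,2), (2,2), (2,0), (1,0), (1,1), (3,1), (3,0), (4,0), (4,2), (5,2)). Every schedule S' of P with nominal number of color changes C(S') ≤ 4 and total process temperature change T(S') = 7 equals either S or the reversal of S. In particular, S is the unique optimal schedule up to reversal for this instance with color-change bound 4. -/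
/-- The optimal schedule from the paper's outlook section. -/
def S : List Job :=
  [(0,2), (2,2), (2,0), (1,0), (1,1), (3,1), (3,0), (4,0), (4,2), (5,2)]

/-- The total temperature change dominates the distance to any later job. -/
lemma dist_le_totalTempChange (L : List Job) : ∀ (p x : Job), x ∈ L →
    Nat.dist p.1 x.1 ≤ totalTempChange (p :: L) := by
  induction L with
  | nil => intro p x hx; simp at hx
  | cons q L ih =>
    intro p x hx
    simp only [totalTempChange]
    rcases List.mem_cons.1 hx with rfl | hx
    · omega
    · have := ih q x hx
      have := Nat.dist.triangle_inequality p.1 q.1 x.1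
      omega

/-- Visiting two later jobs costs at least their distance plus the way to the nearer one. -/
lemma pair_le_totalTempChange (L : List Job) : ∀ (p x y : Job), x ∈ L → y ∈ L →
    min (Nat.dist p.1 x.1) (Nat.dist p.1 y.1) + Nat.dist x.1 y.1 ≤ totalTempChange (p :: L) := by
  induction L with
  | nil => intro p x y hx; simp at hx
  | cons q L ih =>
    intro p x y hx hy
    simp only [totalTempChange]
    rcases List.mem_cons.1 hx with rfl | hx2
    · rcases List.mem_cons.1 hy with rfl | hy
      · simp [Nat.dist_self]
      · have := dist_le_totalTempChange L x y hy
        omega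
    · rcases List.mem_cons.1 hy with rfl | hy
      · have := dist_le_totalTempChange L y x hx2
        have := Nat.dist_comm x.1 y.1
        omega
      · have := ih q x y hx2 hy
        have := Nat.dist.triangle_inequality p.1 q.1 x.1
        have := Nat.dist.triangle_inequality p.1 q.1 y.1
        omega

/-- Lower bound on the remaining temperature change, from the first and last remaining job. -/
def remBound (p : Job) : List Job → ℕ
  | [] => 0
  | x :: xs =>
    let y := xs.getLastD x
    min (Nat.dist p.1 x.1) (Nat.dist p.1 y.1) + Nat.dist x.1 y.1

lemma remBound_le (p : Job) (L rem : List Job) (h : L.Perm rem) :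
    remBound p rem ≤ totalTempChange (p :: L) := by
  cases rem with
  | nil => simp [remBound]
  | cons x xs =>
    apply pair_le_totalTempChange
    · exact h.mem_iff.2 (by simp)
    · refine h.mem_iff.2 ?_
      exact List.getLastD_mem_cons

/-- All completions of a schedule ending in `p` by the jobs `rem`, with at most `c` color
changes and temperature change at most `t` (branch and bound). -/
def search : ℕ → Job → List Job → ℕ → ℕ → List (List Job)
  | 0, _, _, _, _ => [[]]
  | n + 1, p, rem, c, t =>
    bif Nat.ble (remBound p rem) t then
      rem.flatMap fun q =>
        let e := bif Nat.beq p.2 q.2 then 0 else 1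
        let d := Nat.dist p.1 q.1
        bif Nat.ble e c && Nat.ble d t then
          (search n q (rem.erase q) (c - e) (t - d)).map (q :: ·)
        else []
    else []

lemma mem_search (n : ℕ) : ∀ (p : Job) (rem : List Job) (c t : ℕ) (L : List Job),
    L.length = n → L.Perm rem → nominalColorChanges (p :: L) ≤ c →
    totalTempChange (p :: L) ≤ t → L ∈ search n p rem c t := by
  induction n with
  | zero =>
    intro p rem c t L hl _ _ _
    simp [search, List.length_eq_zero_iff.1 hl]
  | succ n ih =>
    intro p rem c t L hl hp hc ht
    have hb : Nat.ble (remBound p rem) t = true :=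
      Nat.ble_eq_true_of_le ((remBound_le p L rem hp).trans ht)
    cases L with
    | nil => simp at hl
    | cons q L =>
      simp only [totalTempChange] at ht
      simp only [nominalColorChanges] at hc
      have he : (bif Nat.beq p.2 q.2 then 0 else 1) = if p.2 ≠ q.2 then 1 else 0 := by
        by_cases h : p.2 = q.2
        · simp [h]
        · have : Nat.beq p.2 q.2 = false := by
            rw [Bool.eq_false_iff]; intro h2; exact h (Nat.eq_of_beq_eq_true h2)
          simp [h, this]
      rw [search, hb, cond_true, List.mem_flatMap]
      refine ⟨q, hp.mem_iff.1 (by simp), ?_⟩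
      simp only [he]
      generalize (if p.2 ≠ q.2 then 1 else 0) = e at hc
      have h1 : Nat.ble e c = true := Nat.ble_eq_true_of_le (by omega)
      have h2 : Nat.ble (Nat.dist p.1 q.1) t = true := Nat.ble_eq_true_of_le (by omega)
      rw [h1, h2, Bool.and_true, cond_true]
      refine List.mem_map.2 ⟨L, ih q _ _ _ L (by simpa using hl) ?_ (by omega) (by omega), rfl⟩
      simpa using hp.erase q

/-- The job set, sorted by temperature. -/
def sortedP : List Job :=
  [(0,2), (1,0), (1,1), (2,0), (2,2), (3,0), (3,1), (4,0), (4,2), (5,2)]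

lemma search_result :
    (sortedP.flatMap fun p => (search 9 p (sortedP.erase p) 4 7).map (p :: ·)) =
      [S, S.reverse] := by
  decide +kernel

/-- `S` is the unique optimal schedule up to reversal: every schedule of `P` with at
most `4` nominal color changes and total temperature change `7` equals `S` or its
reversal. -/
theorem outlook_unique_up_to_reversal (S' : List Job) (hperm : S'.Perm P)
    (hC : nominalColorChanges S' ≤ 4) (hT : totalTempChange S' = 7) :
    S' = S ∨ S' = S.reverse := by
  have hp : S'.Perm sortedP := hperm.trans (by decide)
  have hl : S'.length = 10 := hp.length_eq
  suffices h : S' ∈ [S, S.reverse] by simpa using h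
  rw [← search_result]
  cases S' with
  | nil => simp at hl
  | cons p L =>
    refine List.mem_flatMap.2 ⟨p, hp.mem_iff.1 (by simp), List.mem_map.2 ⟨L, ?_, rfl⟩⟩
    refine mem_search 9 p _ 4 7 L (by simpa using hl) ?_ hC hT.le
    simpa using hp.erase p
end

section
/- Consider the job set P = {(1,0), (2,0), (3,0), (4,0), (1,1), (3,1), (0,2), (2,2), (4,2), (5,2)} of pairs (t, c) with temperature t ∈ ℕ and color c ∈ {0,1,2}. Every schedule S' of P with nominal number of color changes C(S') ≤ 4 and total process temperature change T(S') = 7 contains two maximal monochromatic blocks of the same color whose internal orderings by temperature are opposite: one block is strictly increasing in temperature and the other is strictly decreasing in temperature. -/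
/-- Cost of a color change. -/
def colCost (x y : ℕ) : ℕ := bif Nat.beq x y then 0 else 1

/-- The lower bound for a tour from `a` through `p` and `q` exceeds the budget. -/
def tooFar (a T : ℕ) (rem : List Job) : Bool :=
  rem.any fun p => rem.any fun q =>
    Nat.ble (T + 1) (min (dst a p.1) (dst a q.1) + dst p.1 q.1)

/-- The first optimal schedule. -/
def sol : List Job :=
  [(0, 2), (2, 2), (2, 0), (1, 0), (1, 1), (3, 1), (3, 0), (4, 0), (4, 2), (5, 2)]

/-- Pruned exhaustive search: every completion within budget is a known schedule. -/
def chk : ℕ → List Job → Job → List Job → ℕ → ℕ → Bool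
  | 0, _, _, _, _, _ => false
  | n + 1, acc, a, rem, T, C =>
    bif rem.isEmpty then
      Nat.ble 1 T || decide (a :: acc = sol) || decide (a :: acc = sol.reverse)
    else bif tooFar a.1 T rem then true
    else rem.all fun p =>
      Nat.ble (T + 1) (dst a.1 p.1) || Nat.ble (C + 1) (colCost a.2 p.2) ||
        chk n (a :: acc) p (rem.erase p) (T - dst a.1 p.1) (C - colCost a.2 p.2)

theorem temp_cons (a b : Job) (S : List Job) :
    totalTempChange (a :: b :: S) = dst a.1 b.1 + totalTempChange (b :: S) := rfl

theorem col_cons (a b : Job) (S : List Job) :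
    nominalColorChanges (a :: b :: S) = colCost a.2 b.2 + nominalColorChanges (b :: S) := by
  have h : colCost a.2 b.2 = if a.2 ≠ b.2 then 1 else 0 := by
    unfold colCost
    by_cases h : a.2 = b.2
    · simp [h]
    · have h' : Nat.beq a.2 b.2 = false := by
        rw [Bool.eq_false_iff]; intro hb; exact h (Nat.eq_of_beq_eq_true hb)
      simp [h, h']
  rw [h]; rfl

theorem reach_one (S : List Job) : ∀ (a p : Job), p ∈ S →
    dst a.1 p.1 ≤ totalTempChange (a :: S) := by
  induction S with
  | nil => simp
  | cons b S ih =>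
    intro a p hp
    rw [temp_cons]
    rcases List.mem_cons.1 hp with rfl | hp
    · omega
    · have := ih b p hp
      unfold dst at *
      omega

theorem reach_two (S : List Job) : ∀ (a p q : Job), p ∈ S → q ∈ S →
    min (dst a.1 p.1) (dst a.1 q.1) + dst p.1 q.1 ≤ totalTempChange (a :: S) := by
  induction S with
  | nil => simp
  | cons b S ih =>
    intro a p q hp hq
    rw [temp_cons]
    rcases List.mem_cons.1 hp with rfl | hp' <;> rcases List.mem_cons.1 hq with rfl | hq'
    · unfold dst; omega
    · have := reach_one S p q hq'
      unfold dst at *; omega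
    · have := reach_one S q p hp'
      unfold dst at *; omega
    · have := ih b p q hp' hq'
      unfold dst at *; omega

theorem chk_sound (n : ℕ) : ∀ (acc : List Job) (a : Job) (rem : List Job) (T C : ℕ),
    chk n acc a rem T C = true → ∀ S : List Job, S.Perm rem →
    totalTempChange (a :: S) = T → nominalColorChanges (a :: S) ≤ C →
    S.reverse ++ a :: acc = sol ∨ S.reverse ++ a :: acc = sol.reverse := by
  induction n with
  | zero => intro acc a rem T C h; simp [chk] at h
  | succ n ih =>
    intro acc a rem T C h S hS hT hC
    unfold chk at h
    cases S with
    | nil =>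
      obtain rfl := hS.symm.eq_nil
      have : T = 0 := by rw [← hT]; rfl
      subst this
      simpa using h
    | cons b S =>
      have hb : b ∈ rem := hS.subset (by simp)
      have hne : rem.isEmpty = false := by cases rem <;> simp_all
      have hfar : tooFar a.1 T rem = false := by
        rw [Bool.eq_false_iff]
        intro hf
        unfold tooFar at hf
        obtain ⟨p, hp, hf⟩ := List.any_eq_true.1 hf
        obtain ⟨q, hq, hf⟩ := List.any_eq_true.1 hf
        have h1 := Nat.le_of_ble_eq_true hf
        have h2 := reach_two (b :: S) a p q (hS.symm.subset hp) (hS.symm.subset hq)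
        omega
      rw [hne, hfar] at h
      simp only [cond_false] at h
      have h := List.all_eq_true.1 h b hb
      rw [temp_cons] at hT
      rw [col_cons] at hC
      rw [Bool.or_eq_true, Bool.or_eq_true] at h
      rcases h with (h | h) | h
      · have := Nat.le_of_ble_eq_true h
        omega
      · have := Nat.le_of_ble_eq_true h
        omega
      · have := ih _ _ _ _ _ h S (List.cons_perm_iff_perm_erase.1 hS).2 (by omega) (by omega)
        simpa using this

set_option maxRecDepth 100000 in
theorem chk_all : (P.all fun p => chk 10 [] p (P.erase p) 7 4) = true := by
  decide +kernel

theorem schedules (S : List Job) (hperm : S.Perm P)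
    (hC : nominalColorChanges S ≤ 4) (hT : totalTempChange S = 7) :
    S = sol ∨ S = sol.reverse := by
  cases S with
  | nil => simp [totalTempChange] at hT
  | cons b S =>
    have hb : b ∈ P := hperm.subset (by simp)
    have h := chk_sound _ _ _ _ _ _ (List.all_eq_true.1 chk_all b hb) S
      (List.cons_perm_iff_perm_erase.1 hperm).2 hT hC
    rcases h with h | h
    · right; rw [← h]; simp
    · left; rw [← List.reverse_inj, ← h]; simp

/-- Every optimal schedule of `P` (at most `4` nominal color changes, total temperature
change `7`) contains two maximal monochromatic blocks of the same color with opposite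
internal orderings: one strictly increasing and the other strictly decreasing in
temperature. -/
theorem outlook_opposite_blocks (S' : List Job) (hperm : S'.Perm P)
    (hC : nominalColorChanges S' ≤ 4) (hT : totalTempChange S' = 7) :
    ∃ (pre B₁ mid B₂ post : List Job) (col : ℕ),
      S' = pre ++ B₁ ++ mid ++ B₂ ++ post ∧
      mid ≠ [] ∧ 2 ≤ B₁.length ∧ 2 ≤ B₂.length ∧
      (∀ p ∈ B₁, p.2 = col) ∧ (∀ p ∈ B₂, p.2 = col) ∧
      (∀ p, pre.getLast? = some p → p.2 ≠ col) ∧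
      (∀ p, mid.head? = some p → p.2 ≠ col) ∧
      (∀ p, mid.getLast? = some p → p.2 ≠ col) ∧
      (∀ p, post.head? = some p → p.2 ≠ col) ∧
      ((List.Chain' (fun p q : Job => p.1 < q.1) B₁ ∧
        List.Chain' (fun p q : Job => q.1 < p.1) B₂) ∨
       (List.Chain' (fun p q : Job => q.1 < p.1) B₁ ∧
        List.Chain' (fun p q : Job => p.1 < q.1) B₂)) := by
  rcases schedules S' hperm hC hT with rfl | rfl
  · refine ⟨[(0, 2), (2, 2)], [(2, 0), (1, 0)], [(1, 1), (3, 1)], [(3, 0), (4, 0)],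
      [(4, 2), (5, 2)], 0, rfl, ?_⟩
    simp [List.Chain']
  · refine ⟨[(5, 2), (4, 2)], [(4, 0), (3, 0)], [(3, 1), (1, 1)], [(1, 0), (2, 0)],
      [(2, 2), (0, 2)], 0, rfl, ?_⟩
    simp [List.Chain']
end
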